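/- arXiv:1902.09034 — 2 statements merged into one kernel-verified Lean document; each statement's English description precedes it below -/
import Mathlib

section
/- Let m, n be positive integers, A ∈ M_{n,m}(𝔽_q((z⁻¹))) and θ ∈ 𝔽_q((z⁻¹))ⁿ. Then ω(A, θ) ≥ 1/ω̂(Aᵀ) and ω̂(A, θ) ≥ 1/ω(Aᵀ). -/
/-!
Common setup: the field `𝔽_q((z⁻¹))` of formal power series over a finite field `K` of
cardinality `q`, modeled as the field `FF K` of formal Laurent series in `t = z⁻¹`,
together with its non-Archimedean norm, the embedding of the polynomial ring `𝔽_q[z]`,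
distances to polynomial (vectors), Diophantine exponents, `Bad` sets, continued fractions
and best approximation sequences.
-/

open scoped Classical ENNReal NNReal
open Filter

noncomputable section

namespace FPSDA

variable (K : Type*) [Field K] [Fintype K]

/-- The field `𝔽_q((z⁻¹))` of formal power series in `z⁻¹` over the finite field `K = 𝔽_q`,
modeled as the field of formal Laurent series in the variable `t = z⁻¹`. -/
def FF : Type _ := LaurentSeries K

instance : Field (FF K) := inferInstanceAs (Field (LaurentSeries K))

variable {K}

/-- The identity map, viewing an element of `𝔽_q((z⁻¹))` as a Laurent series in `t = z⁻¹`. -/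
def toL (x : FF K) : LaurentSeries K := x

@[simp] lemma toL_zero : toL (0 : FF K) = 0 := rfl
@[simp] lemma toL_add (x y : FF K) : toL (x + y) = toL x + toL y := rfl
@[simp] lemma toL_neg (x : FF K) : toL (-x) = -toL x := rfl
@[simp] lemma toL_sub (x y : FF K) : toL (x - y) = toL x - toL y := rfl
lemma toL_eq_zero {x : FF K} : toL x = 0 ↔ x = 0 := Iff.rfl

/-- The norm `‖x‖ = q ^ (deg x)` on `𝔽_q((z⁻¹))`, where
`deg x = - (order of x as a Laurent series in z⁻¹)`; `‖0‖ = 0`. -/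
def fnorm (x : FF K) : ℝ :=
  if toL x = 0 then 0 else (Fintype.card K : ℝ) ^ (-(toL x).order)

lemma one_le_q : (1 : ℝ) ≤ (Fintype.card K : ℝ) := by
  exact_mod_cast Fintype.card_pos

lemma fnorm_nonneg (x : FF K) : 0 ≤ fnorm x := by
  unfold fnorm
  split_ifs
  · exact le_refl 0
  · exact zpow_nonneg (by positivity) _

lemma fnorm_eq_zero {x : FF K} : fnorm x = 0 ↔ x = 0 := by
  unfold fnorm
  split_ifs with h
  · exact ⟨fun _ => toL_eq_zero.mp h, fun _ => rfl⟩
  · constructor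
    · intro hc
      exact absurd hc (zpow_ne_zero _ (by
        have h0 : (0:ℝ) < (Fintype.card K : ℝ) := by positivity
        exact ne_of_gt h0))
    · intro hc
      exact absurd (toL_eq_zero.mpr hc) h

lemma fnorm_neg (x : FF K) : fnorm (-x) = fnorm x := by
  unfold fnorm
  rw [toL_neg]
  simp [neg_eq_zero, HahnSeries.order_neg]

lemma fnorm_add_le (x y : FF K) : fnorm (x + y) ≤ max (fnorm x) (fnorm y) := by
  by_cases hxy : x + y = 0
  · rw [fnorm_eq_zero.mpr hxy]
    exact le_max_of_le_left (fnorm_nonneg x)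
  by_cases hx : x = 0
  · rw [hx, zero_add]
    exact le_max_right _ _
  by_cases hy : y = 0
  · rw [hy, add_zero]
    exact le_max_left _ _
  have horder : min (toL x).order (toL y).order ≤ (toL (x + y)).order := by
    rw [toL_add]
    exact HahnSeries.min_order_le_order_add (show toL x + toL y ≠ 0 from hxy)
  have h1 : fnorm (x + y) = (Fintype.card K : ℝ) ^ (-(toL (x+y)).order) := by
    unfold fnorm
    rw [if_neg (show toL (x + y) ≠ 0 from hxy)]
  rcases le_total (toL x).order (toL y).order with h | h
  · have h2 : (toL x).order ≤ (toL (x+y)).order := le_trans (by simp [min_eq_left h]) horder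
    refine le_max_of_le_left ?_
    rw [h1]
    unfold fnorm
    rw [if_neg (show toL x ≠ 0 from hx)]
    exact zpow_le_zpow_right₀ one_le_q (by omega)
  · have h2 : (toL y).order ≤ (toL (x+y)).order := le_trans (by simp [min_eq_right h]) horder
    refine le_max_of_le_right ?_
    rw [h1]
    unfold fnorm
    rw [if_neg (show toL y ≠ 0 from hy)]
    exact zpow_le_zpow_right₀ one_le_q (by omega)

/-- The (ultra)metric `dist x y = ‖x - y‖` on `𝔽_q((z⁻¹))`. -/
instance : MetricSpace (FF K) where
  dist x y := fnorm (x - y)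
  dist_self x := by
    show fnorm (x - x) = 0
    rw [sub_self]
    exact fnorm_eq_zero.mpr rfl
  dist_comm x y := by
    show fnorm (x - y) = fnorm (y - x)
    have h : x - y = -(y - x) := by ring
    rw [h, fnorm_neg]
  dist_triangle x y z := by
    show fnorm (x - z) ≤ fnorm (x - y) + fnorm (y - z)
    have h : x - z = (x - y) + (y - z) := by ring
    calc fnorm (x - z) ≤ max (fnorm (x - y)) (fnorm (y - z)) := by
          rw [h]; exact fnorm_add_le _ _
      _ ≤ fnorm (x - y) + fnorm (y - z) :=
        max_le (le_add_of_nonneg_right (fnorm_nonneg _)) (le_add_of_nonneg_left (fnorm_nonneg _))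
  eq_of_dist_eq_zero := by
    intro x y h
    have h' : x - y = 0 := fnorm_eq_zero.mp h
    exact sub_eq_zero.mp h'

instance : MeasurableSpace (FF K) := borel _
instance : BorelSpace (FF K) := ⟨rfl⟩

/-- The canonical embedding of the polynomial ring `𝔽_q[z]` into `𝔽_q((z⁻¹))`:
the variable `z` is sent to `t⁻¹ = single (-1) 1`. -/
def polyF (P : Polynomial K) : FF K :=
  Polynomial.aeval (HahnSeries.single (-1 : ℤ) (1 : K)) P

/-- Supremum norm of a vector with entries in `𝔽_q((z⁻¹))`. -/
def vnorm {ι : Type*} [Fintype ι] (v : ι → FF K) : ℝ := ⨆ i, fnorm (v i)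

/-- `⟨v⟩`, the distance from the vector `v` to the nearest polynomial vector. -/
def vdist {ι : Type*} [Fintype ι] (v : ι → FF K) : ℝ :=
  ⨅ y : ι → Polynomial K, vnorm (fun i => v i - polyF (y i))

/-- `⟨x⟩`, the distance from the scalar `x` to the nearest polynomial. -/
def sdist (x : FF K) : ℝ := ⨅ y : Polynomial K, fnorm (x - polyF y)

/-- The fractional part `{x} = Σ_{i ≥ 1} a_i z^{-i}` of `x = Σ_i a_i z^{-i}`. -/
def fracPart (x : FF K) : FF K :=
  (⟨fun i => if 1 ≤ i then (toL x).coeff i else 0, (toL x).isPWO_support'.mono (by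
      intro i hi
      by_cases h : (1:ℤ) ≤ i
      · simpa [Function.mem_support, h] using hi
      · simp [Function.mem_support, h] at hi)⟩ : LaurentSeries K)

/-- The integer part `[x] = Σ_{i ≤ 0} a_i z^{-i}` of `x = Σ_i a_i z^{-i}`, as a polynomial
in `z`. -/
def intPoly (x : FF K) : Polynomial K :=
  ∑ i ∈ Finset.range ((-(toL x).order).toNat + 1),
    Polynomial.monomial i ((toL x).coeff (-(i : ℤ)))

/-- `x ∈ 𝔽_q((z⁻¹))` is irrational if it is not in `𝔽_q(z)`, i.e. is not a ratio of two
polynomials in `z`. -/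
def FIrrational (x : FF K) : Prop :=
  ∀ P Q : Polynomial K, Q ≠ 0 → x * polyF Q ≠ polyF P

section Exponents

variable {m n : ℕ}

/-- The norm `‖x‖ = max_j ‖x_j‖` of a polynomial vector `x`. -/
def pnorm {ι : Type*} [Fintype ι] (x : ι → Polynomial K) : ℝ :=
  vnorm (fun i => (polyF (x i) : FF K))

/-- The system `⟨A x - θ⟩ ≤ H^{-ω}`, `‖x‖ ≤ H` has a polynomial solution `x`. -/
def Solv (A : Matrix (Fin n) (Fin m) (FF K)) (θ : Fin n → FF K) (ω H : ℝ) : Prop :=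
  ∃ x : Fin m → Polynomial K,
    vdist (A.mulVec (fun j => polyF (x j)) - θ) ≤ H ^ (-ω) ∧ pnorm x ≤ H

/-- The system `⟨A x⟩ ≤ H^{-ω}`, `‖x‖ ≤ H` has a nonzero polynomial solution `x`. -/
def SolvHom (A : Matrix (Fin n) (Fin m) (FF K)) (ω H : ℝ) : Prop :=
  ∃ x : Fin m → Polynomial K, x ≠ 0 ∧
    vdist (A.mulVec (fun j => polyF (x j))) ≤ H ^ (-ω) ∧ pnorm x ≤ H

/-- The inhomogeneous exponent `ω(A, θ)`: the supremum (in `[0,∞]`) of all `ω` such that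
for arbitrarily large `H` the system `⟨A x - θ⟩ ≤ H^{-ω}`, `‖x‖ ≤ H` has a polynomial
solution. -/
def omegaInhom (A : Matrix (Fin n) (Fin m) (FF K)) (θ : Fin n → FF K) : ℝ≥0∞ :=
  ⨆ (ω : ℝ) (_ : ∀ H₀ : ℝ, ∃ H : ℝ, H₀ ≤ H ∧ Solv A θ ω H), ENNReal.ofReal ω

/-- The uniform inhomogeneous exponent `ω̂(A, θ)`: as `ω(A, θ)`, but with a solution for
all sufficiently large `H`. -/
def omegaHatInhom (A : Matrix (Fin n) (Fin m) (FF K)) (θ : Fin n → FF K) : ℝ≥0∞ :=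
  ⨆ (ω : ℝ) (_ : ∃ H₀ : ℝ, ∀ H : ℝ, H₀ ≤ H → Solv A θ ω H), ENNReal.ofReal ω

/-- The homogeneous exponent `ω(A)`. -/
def omegaHom (A : Matrix (Fin n) (Fin m) (FF K)) : ℝ≥0∞ :=
  ⨆ (ω : ℝ) (_ : ∀ H₀ : ℝ, ∃ H : ℝ, H₀ ≤ H ∧ SolvHom A ω H), ENNReal.ofReal ω

/-- The uniform homogeneous exponent `ω̂(A)`. -/
def omegaHatHom (A : Matrix (Fin n) (Fin m) (FF K)) : ℝ≥0∞ :=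
  ⨆ (ω : ℝ) (_ : ∃ H₀ : ℝ, ∀ H : ℝ, H₀ ≤ H → SolvHom A ω H), ENNReal.ofReal ω

/-- `A` is non-degenerate: the `𝔽_q[z]`-module `Aᵀ 𝔽_q[z]ⁿ + 𝔽_q[z]^m ⊆ 𝔽_q((z⁻¹))^m` has
rank `m + n` over `𝔽_q[z]`, i.e. its `m + n` natural generators are linearly independent
over `𝔽_q[z]`; equivalently, no nonzero polynomial vector `u` makes `Aᵀ u` a polynomial
vector. -/
def Nondegenerate (A : Matrix (Fin n) (Fin m) (FF K)) : Prop :=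
  ∀ u : Fin n → Polynomial K,
    (∃ v : Fin m → Polynomial K,
      A.transpose.mulVec (fun i => polyF (u i)) = fun j => polyF (v j)) → u = 0

/-- `liminf_{x ∈ 𝔽_q[z]^m, ‖x‖ → ∞} ‖x‖^{m/n} ⟨A x - θ⟩`, computed in `[0, ∞]`. -/
def badLiminf (A : Matrix (Fin n) (Fin m) (FF K)) (θ : Fin n → FF K) : ℝ≥0∞ :=
  Filter.liminf
    (fun x : Fin m → Polynomial K =>
      ENNReal.ofReal ((pnorm x) ^ ((m : ℝ) / (n : ℝ)) *
        vdist (A.mulVec (fun j => polyF (x j)) - θ)))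
    (Filter.comap (fun x : Fin m → Polynomial K => pnorm x) Filter.atTop)

/-- The set `Bad^ε(A)` of `θ` in the unit polydisc `𝕀ⁿ` with
`liminf_{‖x‖ → ∞} ‖x‖^{m/n} ⟨A x - θ⟩ ≥ ε`. -/
def Bad (A : Matrix (Fin n) (Fin m) (FF K)) (ε : ℝ) : Set (Fin n → FF K) :=
  {θ | (∀ i, fnorm (θ i) < 1) ∧ ENNReal.ofReal ε ≤ badLiminf A θ}

/-- The set `Bad(A) = ⋃_{ε > 0} Bad^ε(A)`. -/
def BadAll (A : Matrix (Fin n) (Fin m) (FF K)) : Set (Fin n → FF K) :=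
  ⋃ (ε : ℝ) (_ : 0 < ε), Bad A ε

/-- `M(y) = ⟨Aᵀ y⟩` for a polynomial vector `y`. -/
def Mfun (A : Matrix (Fin n) (Fin m) (FF K)) (y : Fin n → Polynomial K) : ℝ :=
  vdist (A.transpose.mulVec (fun i => polyF (y i)))

/-- `y 1, y 2, …` is a sequence of best approximations related to `Aᵀ`:
`1 = Y_1 < Y_2 < ⋯`, `M_1 > M_2 > ⋯`, and `M(x) ≥ M_k` for every nonzero polynomial
vector `x` with `‖x‖ < Y_{k+1}` (the value `y 0` is irrelevant). -/
def IsBestApproxSeq (A : Matrix (Fin n) (Fin m) (FF K))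
    (y : ℕ → Fin n → Polynomial K) : Prop :=
  pnorm (y 1) = 1 ∧
  (∀ k, 1 ≤ k → pnorm (y k) < pnorm (y (k + 1))) ∧
  (∀ k, 1 ≤ k → Mfun A (y (k + 1)) < Mfun A (y k)) ∧
  (∀ k, 1 ≤ k → ∀ x : Fin n → Polynomial K, x ≠ 0 → pnorm x < pnorm (y (k + 1)) →
    Mfun A (y k) ≤ Mfun A x)

end Exponents

section Scalar

/-- The system `⟨ξ x - θ⟩ ≤ H^{-ω}`, `‖x‖ ≤ H` has a polynomial solution `x`. -/
def sSolv (ξ θ : FF K) (ω H : ℝ) : Prop :=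
  ∃ x : Polynomial K, sdist (ξ * polyF x - θ) ≤ H ^ (-ω) ∧ fnorm (polyF x) ≤ H

/-- The scalar inhomogeneous exponent `ω((ξ), θ)`. -/
def somegaInhom (ξ θ : FF K) : ℝ≥0∞ :=
  ⨆ (ω : ℝ) (_ : ∀ H₀ : ℝ, ∃ H : ℝ, H₀ ≤ H ∧ sSolv ξ θ ω H), ENNReal.ofReal ω

/-- The scalar uniform inhomogeneous exponent `ω̂((ξ), θ)`. -/
def somegaHatInhom (ξ θ : FF K) : ℝ≥0∞ :=
  ⨆ (ω : ℝ) (_ : ∃ H₀ : ℝ, ∀ H : ℝ, H₀ ≤ H → sSolv ξ θ ω H), ENNReal.ofReal ω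

/-- The scalar homogeneous exponent `ω((ξ))`. -/
def somegaHom (ξ : FF K) : ℝ≥0∞ :=
  ⨆ (ω : ℝ) (_ : ∀ H₀ : ℝ, ∃ H : ℝ, H₀ ≤ H ∧ ∃ x : Polynomial K, x ≠ 0 ∧
      sdist (ξ * polyF x) ≤ H ^ (-ω) ∧ fnorm (polyF x) ≤ H), ENNReal.ofReal ω

/-- `liminf_{x ∈ 𝔽_q[z], ‖x‖ → ∞} ‖x‖ ⟨α x - θ⟩`, computed in `[0, ∞]`. -/
def sBadLiminf (α θ : FF K) : ℝ≥0∞ :=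
  Filter.liminf
    (fun x : Polynomial K => ENNReal.ofReal (fnorm (polyF x) * sdist (α * polyF x - θ)))
    (Filter.comap (fun x : Polynomial K => fnorm (polyF x)) Filter.atTop)

/-- The set `Bad^ε(α)` of `θ ∈ 𝕀` with `liminf_{‖x‖ → ∞} ‖x‖ ⟨α x - θ⟩ ≥ ε`. -/
def sBad (α : FF K) (ε : ℝ) : Set (FF K) :=
  {θ | fnorm θ < 1 ∧ ENNReal.ofReal ε ≤ sBadLiminf α θ}

end Scalar

section CF

/-- The Gauss map `T x = 1/x - [1/x]` on `𝔽_q((z⁻¹))`. -/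
def gaussMap (x : FF K) : FF K := fracPart x⁻¹

/-- `pquot α k` is the `(k+1)`-st partial quotient `A_{k+1} = [1 / T^k α]` of the
continued fraction expansion of `α`. -/
def pquot (α : FF K) (k : ℕ) : Polynomial K := intPoly ((gaussMap^[k] α)⁻¹)

/-- `cfQ α k` is the denominator `Q_k` of the `k`-th convergent of the continued fraction
expansion of `α`: `Q_0 = 1`, `Q_1 = A_1`, `Q_{k+2} = A_{k+2} Q_{k+1} + Q_k`. -/
def cfQ (α : FF K) : ℕ → Polynomial K
  | 0 => 1
  | 1 => pquot α 0
  | (k + 2) => pquot α (k + 1) * cfQ α (k + 1) + cfQ α k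

/-- `α` is singular on average: for every `c > 0` the proportion of `l ∈ {1, …, N}` for
which `‖{Q α}‖ ≤ c 2^{-l}` has a solution `Q ∈ 𝔽_q[z]` with `0 < ‖Q‖ ≤ 2^l` tends to `1`
as `N → ∞`. -/
def SingularOnAverage (α : FF K) : Prop :=
  ∀ c : ℝ, 0 < c →
    Filter.Tendsto
      (fun N : ℕ =>
        (((Finset.Icc 1 N).filter (fun l : ℕ =>
            ∃ Q : Polynomial K, Q ≠ 0 ∧ fnorm (polyF Q) ≤ 2 ^ l ∧
              fnorm (fracPart (polyF Q * α)) ≤ c / 2 ^ l)).card : ℝ) / (N : ℝ))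
      Filter.atTop (nhds 1)

end CF

end FPSDA

open FPSDA MeasureTheory

/-!
Prescribing the first `L` fractional digits of `A x`, for `x` a vector of polynomials of degree
`< N`, is a linear system over `𝔽_q` in the coefficients of `x`. Its matrix has entries
`(A i j)_{k + l + 1}`, which depend on the digit index `k` and the coefficient index `l` only
through `k + l`, so replacing `A` by `Aᵀ` and exchanging `L` with `N` transposes it. Hence either
every `θ` can be approximated by some `A x`, or a nonzero row vector annihilates the matrix, and its
entries are the coefficients of a polynomial vector `y ≠ 0` with `Aᵀ y` close to a polynomial
vector. With `q ^ N ≤ H < q ^ (N + 1)` and `q ^ L ≤ H ^ w < q ^ (L + 1)` this says that whenever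
the system `⟨A x - θ⟩ ≤ H ^ (-w)`, `‖x‖ ≤ H` is insoluble, the dual system `⟨Aᵀ y⟩ ≤ Y ^ (-1 / w)`,
`‖y‖ ≤ Y` with `Y = H ^ w` has a nonzero solution.
-/

namespace FPSDA

open scoped Matrix Polynomial

section Alternative

variable {F R C : Type*} [Field F] [Fintype R] [Fintype C]

lemma mulVec_surjective_of_vecMul_injective {M : Matrix R C F}
    (hM : Function.Injective M.vecMul) : Function.Surjective M.mulVec := by
  have hrank : M.rank = Fintype.card R := (Matrix.vecMul_injective_iff.mp hM).rank_matrix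
  have hrange : LinearMap.range M.mulVecLin = ⊤ :=
    Submodule.eq_top_of_finrank_eq (hrank.trans (Module.finrank_fintype_fun_eq_card F).symm)
  exact LinearMap.range_eq_top.mp hrange

lemma mulVec_surjective_or_exists_vecMul_eq_zero (M : Matrix R C F) :
    Function.Surjective M.mulVec ∨ ∃ d : R → F, d ≠ 0 ∧ d ᵥ* M = 0 := by
  by_cases hM : Function.Injective M.vecMul
  · exact .inl (mulVec_surjective_of_vecMul_injective hM)
  · have hker : ¬ ∀ d, d ᵥ* M = 0 → d = 0 :=
      fun h => hM ((injective_iff_map_eq_zero M.vecMulLinear).mpr h)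
    push Not at hker
    obtain ⟨d, hd, hd0⟩ := hker
    exact .inr ⟨d, hd0, hd⟩

end Alternative

variable {K : Type*} [Field K]

section Coefficients

lemma toL_polyF (P : K[X]) :
    toL (polyF P) = P.sum fun l a => HahnSeries.single (-(l : ℤ)) a := by
  have hterm (l : ℕ) (a : K) :
      algebraMap K (LaurentSeries K) a * HahnSeries.single (-1 : ℤ) 1 ^ l =
        HahnSeries.single (-(l : ℤ)) a := by
    rw [HahnSeries.single_pow, show algebraMap K (LaurentSeries K) a = HahnSeries.single 0 a from
      HahnSeries.ofPowerSeries_C a, HahnSeries.single_mul_single]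
    simp
  change Polynomial.aeval (HahnSeries.single (-1 : ℤ) (1 : K) : LaurentSeries K) P = _
  simp only [Polynomial.aeval_def, Polynomial.eval₂_eq_sum, hterm]

lemma coeff_mul_polyF (f : FF K) (P : K[X]) (k : ℤ) :
    (toL (f * polyF P)).coeff k = P.sum fun l a => (toL f).coeff (k + l) * a := by
  change (toL f * toL (polyF P)).coeff k = _
  simp only [toL_polyF, Polynomial.sum_def, Finset.mul_sum, HahnSeries.coeff_sum,
    HahnSeries.coeff_mul_single, sub_neg_eq_add]

lemma coeff_mul_polyF_ofFn (f : FF K) {N : ℕ} (c : Fin N → K) (k : ℤ) :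
    (toL (f * polyF (Polynomial.ofFn N c))).coeff k =
      ∑ l : Fin N, (toL f).coeff (k + l) * c l := by
  rw [coeff_mul_polyF, ← Polynomial.sum_fin _ (fun _ => mul_zero _) (Polynomial.ofFn_degree_lt c)]
  simp only [Polynomial.ofFn_coeff_eq_val_of_lt, Fin.is_lt, Fin.eta]

lemma coeff_polyF_of_pos (P : K[X]) {k : ℤ} (hk : 0 < k) : (toL (polyF P)).coeff k = 0 := by
  rw [toL_polyF, Polynomial.sum_def, HahnSeries.coeff_sum]
  exact Finset.sum_eq_zero fun l _ => HahnSeries.coeff_single_of_ne (by omega)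

lemma coeff_polyF_neg (P : K[X]) (l : ℕ) : (toL (polyF P)).coeff (-(l : ℤ)) = P.coeff l := by
  rw [toL_polyF, Polynomial.sum_def, HahnSeries.coeff_sum]
  simp +contextual [HahnSeries.coeff_single, eq_comm]

lemma coeff_intPoly (x : FF K) (l : ℕ) : (intPoly x).coeff l = (toL x).coeff (-(l : ℤ)) := by
  have hsmall (h : ¬ l < (-(toL x).order).toNat + 1) : (toL x).coeff (-(l : ℤ)) = 0 :=
    HahnSeries.coeff_eq_zero_of_lt_order (by omega)
  simpa [intPoly, Polynomial.finsetSum_coeff, Polynomial.coeff_monomial, eq_comm] using hsmall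

lemma coeff_fracPart (x : FF K) (k : ℤ) :
    (toL (fracPart x)).coeff k = if 1 ≤ k then (toL x).coeff k else 0 := rfl

lemma sub_polyF_intPoly (x : FF K) : x - polyF (intPoly x) = fracPart x := by
  refine HahnSeries.ext (funext fun k => ?_)
  change (toL x - toL (polyF (intPoly x))).coeff k = (toL (fracPart x)).coeff k
  rw [HahnSeries.coeff_sub, coeff_fracPart]
  split_ifs with hk
  · rw [coeff_polyF_of_pos _ (by omega), sub_zero]
  · obtain ⟨l, rfl⟩ : ∃ l : ℕ, k = -(l : ℤ) := ⟨(-k).toNat, by omega⟩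
    rw [coeff_polyF_neg, coeff_intPoly, sub_self]

end Coefficients

section Hankel

variable {ι κ : Type*}

/-- The vector of polynomials of degree `< N` whose coefficients are listed by `c`. -/
def polyVec (N : ℕ) (c : ι × Fin N → K) (j : ι) : K[X] :=
  Polynomial.ofFn N fun l => c (j, l)

lemma polyVec_ne_zero {N : ℕ} {c : ι × Fin N → K} (hc : c ≠ 0) : polyVec N c ≠ 0 := by
  intro h
  refine hc (funext fun ⟨j, l⟩ => ?_)
  have hj : Polynomial.ofFn N (fun l => c (j, l)) = Polynomial.ofFn N 0 := by
    rw [Polynomial.ofFn_zero]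
    exact congrFun h j
  exact congrFun (Polynomial.injective_ofFn N hj) l

/-- The block Hankel matrix of the linear map over `𝔽_q` sending the coefficients of a vector `x`
of polynomials of degree `< N` to the coefficients of `z⁻¹, …, z^{-L}` in `A x`. -/
def hankel (A : Matrix κ ι (FF K)) (N L : ℕ) : Matrix (κ × Fin L) (ι × Fin N) K :=
  .of fun r c => (toL (A r.1 c.1)).coeff (r.2 + 1 + c.2)

lemma hankel_transpose (A : Matrix κ ι (FF K)) (N L : ℕ) :
    hankel Aᵀ L N = (hankel A N L)ᵀ := by
  ext r c
  simp only [hankel, Matrix.of_apply, Matrix.transpose_apply]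
  congr 1
  ring

lemma coeff_mulVec_polyVec [Fintype ι] (A : Matrix κ ι (FF K)) {N L : ℕ} (c : ι × Fin N → K)
    (i : κ) (k : Fin L) :
    (toL ((A *ᵥ fun j => polyF (polyVec N c j)) i)).coeff (k + 1) = (hankel A N L *ᵥ c) (i, k) := by
  change (∑ j, toL (A i j * polyF (polyVec N c j))).coeff _ = _
  simp only [HahnSeries.coeff_sum, polyVec, coeff_mul_polyF_ofFn, Matrix.mulVec, dotProduct, hankel,
    Matrix.of_apply, Fintype.sum_prod_type]

end Hankel

variable [Fintype K]

section Norms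

variable {ι : Type*} [Fintype ι]

lemma fnorm_le_of_coeff_eq_zero {x : FF K} {N : ℤ} (h : ∀ k < N, (toL x).coeff k = 0) :
    fnorm x ≤ (Fintype.card K : ℝ) ^ (-N) := by
  unfold fnorm
  split_ifs with hx
  · positivity
  · refine zpow_le_zpow_right₀ one_le_q (neg_le_neg ?_)
    by_contra! hN
    exact HahnSeries.coeff_order_eq_zero.not.mpr hx (h _ hN)

lemma fnorm_polyF_le {P : K[X]} {N : ℕ} (hP : P.degree ≤ N) :
    fnorm (polyF P) ≤ (Fintype.card K : ℝ) ^ N := by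
  have hcoeff : ∀ k < -(N : ℤ), (toL (polyF P)).coeff k = 0 := fun k hk => by
    obtain ⟨l, rfl⟩ : ∃ l : ℕ, k = -(l : ℤ) := ⟨(-k).toNat, by omega⟩
    rw [coeff_polyF_neg]
    have hNl : N < l := by omega
    exact Polynomial.coeff_eq_zero_of_degree_lt (hP.trans_lt (by exact_mod_cast hNl))
  simpa using fnorm_le_of_coeff_eq_zero hcoeff

lemma pnorm_polyVec_le {N : ℕ} (c : ι × Fin N → K) :
    pnorm (polyVec N c) ≤ (Fintype.card K : ℝ) ^ N :=
  Real.iSup_le (fun _ => fnorm_polyF_le (Polynomial.ofFn_degree_lt _).le) (by positivity)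

lemma vdist_le_vnorm_sub (v : ι → FF K) (y : ι → K[X]) :
    vdist v ≤ vnorm fun i => v i - polyF (y i) :=
  ciInf_le ⟨0, by rintro _ ⟨y, rfl⟩; exact Real.iSup_nonneg fun _ => fnorm_nonneg _⟩ y

lemma vdist_le_of_coeff_eq_zero {v : ι → FF K} {L : ℕ}
    (h : ∀ i, ∀ k : Fin L, (toL (v i)).coeff (k + 1) = 0) :
    vdist v ≤ ((Fintype.card K : ℝ) ^ (L + 1))⁻¹ := by
  have hfrac (i : ι) : ∀ k < (L + 1 : ℤ), (toL (fracPart (v i))).coeff k = 0 := fun k hk => by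
    rw [coeff_fracPart]
    split_ifs with hk1
    · obtain ⟨l, rfl⟩ : ∃ l : ℕ, k = l + 1 := ⟨(k - 1).toNat, by omega⟩
      exact h i ⟨l, by omega⟩
    · rfl
  calc vdist v ≤ vnorm fun i => v i - polyF (intPoly (v i)) := vdist_le_vnorm_sub _ _
    _ = vnorm fun i => fracPart (v i) := by simp only [sub_polyF_intPoly]
    _ ≤ ((Fintype.card K : ℝ) ^ (L + 1))⁻¹ := Real.iSup_le
      (fun i => (fnorm_le_of_coeff_eq_zero (hfrac i)).trans_eq (by rw [zpow_neg]; norm_cast))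
      (by positivity)

end Norms

section Transference

lemma exists_approx_or_exists_dual_approx {ι κ : Type*} [Fintype ι] [Fintype κ]
    (A : Matrix κ ι (FF K)) (N L : ℕ) :
    (∀ θ : κ → FF K, ∃ x : ι → K[X],
      vdist ((A *ᵥ fun j => polyF (x j)) - θ) ≤ ((Fintype.card K : ℝ) ^ (L + 1))⁻¹ ∧
        pnorm x ≤ (Fintype.card K : ℝ) ^ N) ∨
    ∃ y : κ → K[X], y ≠ 0 ∧
      vdist (Aᵀ *ᵥ fun i => polyF (y i)) ≤ ((Fintype.card K : ℝ) ^ (N + 1))⁻¹ ∧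
        pnorm y ≤ (Fintype.card K : ℝ) ^ L := by
  rcases mulVec_surjective_or_exists_vecMul_eq_zero (hankel A N L) with hsurj | ⟨d, hd0, hd⟩
  · refine .inl fun θ => ?_
    obtain ⟨c, hc⟩ := hsurj fun r => (toL (θ r.1)).coeff (r.2 + 1)
    refine ⟨polyVec N c, vdist_le_of_coeff_eq_zero fun i k => ?_, pnorm_polyVec_le c⟩
    rw [Pi.sub_apply, toL_sub, HahnSeries.coeff_sub, coeff_mulVec_polyVec, hc, sub_self]
  · refine .inr ⟨polyVec L d, polyVec_ne_zero hd0,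
      vdist_le_of_coeff_eq_zero fun j l => ?_, pnorm_polyVec_le d⟩
    rw [coeff_mulVec_polyVec, hankel_transpose, Matrix.mulVec_transpose, hd, Pi.zero_apply]

lemma solv_or_solvHom_transpose {m n : ℕ} (A : Matrix (Fin n) (Fin m) (FF K)) (θ : Fin n → FF K)
    {w H : ℝ} (hw : 0 < w) (hH : 1 ≤ H) : Solv A θ w H ∨ SolvHom Aᵀ w⁻¹ (H ^ w) := by
  have hH0 : 0 < H := by positivity
  have hq : (1 : ℝ) < Fintype.card K := by exact_mod_cast Fintype.one_lt_card
  obtain ⟨N, hNH, hHN⟩ := exists_nat_pow_near hH hq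
  obtain ⟨L, hLH, hHL⟩ := exists_nat_pow_near (Real.one_le_rpow hH hw.le) hq
  have hinv : (H ^ w) ^ (-w⁻¹) = H⁻¹ := by
    rw [Real.rpow_neg (by positivity), Real.rpow_rpow_inv hH0.le hw.ne']
  rcases exists_approx_or_exists_dual_approx A N L with happrox | ⟨y, hy0, hdist, hy⟩
  · obtain ⟨x, hdist, hx⟩ := happrox θ
    refine .inl ⟨x, hdist.trans ?_, hx.trans hNH⟩
    rw [Real.rpow_neg hH0.le]
    exact inv_anti₀ (by positivity) hHL.le
  · refine .inr ⟨y, hy0, hdist.trans ?_, hy.trans hLH⟩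
    rw [hinv]
    exact inv_anti₀ hH0 hHN.le

end Transference

section LowerBounds

variable {m n : ℕ} {A : Matrix (Fin n) (Fin m) (FF K)} {θ : Fin n → FF K} {w : ℝ}

lemma ofReal_le_omegaInhom (h : ∃ᶠ H in atTop, Solv A θ w H) :
    ENNReal.ofReal w ≤ omegaInhom A θ :=
  le_iSup₂ (f := fun ω (_ : ∀ H₀, ∃ H, H₀ ≤ H ∧ Solv A θ ω H) => ENNReal.ofReal ω)
    w (frequently_atTop.mp h)

lemma ofReal_le_omegaHatInhom (h : ∀ᶠ H in atTop, Solv A θ w H) :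
    ENNReal.ofReal w ≤ omegaHatInhom A θ :=
  le_iSup₂ (f := fun ω (_ : ∃ H₀, ∀ H, H₀ ≤ H → Solv A θ ω H) => ENNReal.ofReal ω)
    w (eventually_atTop.mp h)

lemma ofReal_le_omegaHom (h : ∃ᶠ H in atTop, SolvHom A w H) :
    ENNReal.ofReal w ≤ omegaHom A :=
  le_iSup₂ (f := fun ω (_ : ∀ H₀, ∃ H, H₀ ≤ H ∧ SolvHom A ω H) => ENNReal.ofReal ω)
    w (frequently_atTop.mp h)

lemma ofReal_le_omegaHatHom (h : ∀ᶠ H in atTop, SolvHom A w H) :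
    ENNReal.ofReal w ≤ omegaHatHom A :=
  le_iSup₂ (f := fun ω (_ : ∃ H₀, ∀ H, H₀ ≤ H → SolvHom A ω H) => ENNReal.ofReal ω)
    w (eventually_atTop.mp h)

end LowerBounds

section Asymptotics

lemma eventually_atTop_of_eventually_rpow {p : ℝ → Prop} {w : ℝ} (hw : 0 < w)
    (h : ∀ᶠ H in atTop, p (H ^ w)) : ∀ᶠ Y in atTop, p Y := by
  filter_upwards [(tendsto_rpow_atTop (inv_pos.mpr hw)).eventually h, eventually_ge_atTop 0]
    with Y hY hY0
  rwa [Real.rpow_inv_rpow hY0 hw.ne'] at hY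

lemma inv_le_of_forall_lt_ofReal {a b : ℝ≥0∞}
    (h : ∀ w : ℝ, 0 < w → b < ENNReal.ofReal w → ENNReal.ofReal w⁻¹ ≤ a) : a⁻¹ ≤ b := by
  refine le_of_forall_gt_imp_ge_of_dense fun c hbc => ?_
  rcases eq_or_ne c ∞ with rfl | hc
  · exact le_top
  · have hcw : ENNReal.ofReal c.toReal = c := ENNReal.ofReal_toReal hc
    have hw : 0 < c.toReal := ENNReal.toReal_pos (pos_of_gt hbc).ne' hc
    have hca := h c.toReal hw (hcw.symm ▸ hbc)
    rw [ENNReal.ofReal_inv_of_pos hw, hcw] at hca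
    exact ENNReal.inv_le_iff_inv_le.mp hca

end Asymptotics

end FPSDA

/-- Lower bounds for the inhomogeneous exponents in terms of the homogeneous exponents of
the transposed matrix: `ω(A, θ) ≥ 1 / ω̂(Aᵀ)` and `ω̂(A, θ) ≥ 1 / ω(Aᵀ)`
(with `1/∞ = 0`). -/
theorem exponent_lower_bounds {K : Type*} [Field K] [Fintype K] {m n : ℕ}
    (hm : 0 < m) (hn : 0 < n)
    (A : Matrix (Fin n) (Fin m) (FF K)) (θ : Fin n → FF K) :
    (omegaHatHom A.transpose)⁻¹ ≤ omegaInhom A θ ∧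
      (omegaHom A.transpose)⁻¹ ≤ omegaHatInhom A θ := by
  have hdual {w : ℝ} (hw : 0 < w) :
      ∀ᶠ H in atTop, ¬ Solv A θ w H → SolvHom A.transpose w⁻¹ (H ^ w) := by
    filter_upwards [eventually_ge_atTop 1] with H hH
      using (solv_or_solvHom_transpose A θ hw hH).resolve_left
  constructor
  · refine inv_le_of_forall_lt_ofReal fun w hw hlt => ?_
    have hinsoluble : ∀ᶠ H in atTop, ¬ Solv A θ w H :=
      not_frequently.mp fun h => hlt.not_ge (ofReal_le_omegaInhom h)
    exact ofReal_le_omegaHatHom (eventually_atTop_of_eventually_rpow hw (hinsoluble.mp (hdual hw)))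
  · refine inv_le_of_forall_lt_ofReal fun w hw hlt => ?_
    have hinsoluble : ∃ᶠ H in atTop, ¬ Solv A θ w H :=
      not_eventually.mp fun h => hlt.not_ge (ofReal_le_omegaHatInhom h)
    exact ofReal_le_omegaHom ((tendsto_rpow_atTop hw).frequently (hinsoluble.mp (hdual hw)))
end
end

section
/- Let m, n be positive integers, A ∈ M_{n,m}(𝔽_q((z⁻¹))) and θ ∈ 𝔽_q((z⁻¹))ⁿ. If θ does not belong to A𝔽_q[z]^m + 𝔽_q[z]ⁿ, then ω̂(A, θ) ≤ ω(A). -/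
/-!
Common setup: the field `𝔽_q((z⁻¹))` of formal power series over a finite field `K` of
cardinality `q`, modeled as the field `FF K` of formal Laurent series in `t = z⁻¹`,
together with its non-Archimedean norm, the embedding of the polynomial ring `𝔽_q[z]`,
distances to polynomial (vectors), Diophantine exponents, `Bad` sets, continued fractions
and best approximation sequences.
-/

open scoped Classical ENNReal NNReal
open Filter

noncomputable section

open FPSDA MeasureTheory

/-!
Let `ω > 0` be a uniform exponent for `(A, θ)` and let `x` solve the system at a large height. Its
error is positive, since `θ ∉ A 𝔽_q[z]^m + 𝔽_q[z]ⁿ`, hence equals `T ^ (-ω)` for some `T`, which is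
at least that height. The solution `x'` at the height `c * T` with `c > 1` has a strictly smaller
error, so `x ≠ x'`, and by the ultrametric inequality `x - x'` is a nonzero solution of the
homogeneous system with `⟨A (x - x')⟩ ≤ T ^ (-ω)` and `‖x - x'‖ ≤ c * T`. The constant `c` is
absorbed by passing to any exponent smaller than `ω`.
-/

namespace FPSDA

lemma eventually_rpow_neg_le_const_mul_rpow_neg {c η ω : ℝ} (hc : 0 < c) (hη : η < ω) :
    ∀ᶠ T : ℝ in atTop, T ^ (-ω) ≤ (c * T) ^ (-η) := by
  filter_upwards [eventually_gt_atTop 0,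
    (tendsto_rpow_atTop (sub_pos.2 hη)).eventually_ge_atTop (c ^ η)] with T hT hcT
  calc T ^ (-ω) = c ^ (-η) * c ^ η * T ^ (-ω) := by
        rw [← Real.rpow_add hc, neg_add_cancel, Real.rpow_zero, one_mul]
    _ ≤ c ^ (-η) * T ^ (ω - η) * T ^ (-ω) := by gcongr
    _ = (c * T) ^ (-η) := by
        rw [mul_assoc, ← Real.rpow_add hT, Real.mul_rpow hc.le hT.le]
        ring_nf

variable {K : Type*} [Field K]

lemma polyF_sub (P Q : Polynomial K) : polyF (P - Q) = polyF P - polyF Q :=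
  map_sub (Polynomial.aeval (HahnSeries.single (-1 : ℤ) (1 : K))) P Q

lemma polyF_neg (P : Polynomial K) : polyF (-P) = -polyF P :=
  map_neg (Polynomial.aeval (HahnSeries.single (-1 : ℤ) (1 : K))) P

lemma toL_polyF_monomial (i : ℕ) (a : K) :
    toL (polyF (Polynomial.monomial i a)) = HahnSeries.single (-(i : ℤ)) a := by
  change Polynomial.aeval (HahnSeries.single (-1 : ℤ) (1 : K)) (Polynomial.monomial i a) = _
  simp [Polynomial.aeval_monomial, LaurentSeries.algebraMap_apply, HahnSeries.C_apply]

lemma coeff_toL_polyF (P : Polynomial K) (k : ℕ) :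
    (toL (polyF P)).coeff (-(k : ℤ)) = P.coeff k := by
  induction P using Polynomial.induction_on' with
  | add P Q hP hQ =>
    have hadd : toL (polyF (P + Q)) = toL (polyF P) + toL (polyF Q) := map_add _ P Q
    rw [hadd, HahnSeries.coeff_add, hP, hQ, Polynomial.coeff_add]
  | monomial i a =>
    simp [toL_polyF_monomial, HahnSeries.coeff_single, Polynomial.coeff_monomial, eq_comm]

variable [Fintype K]

lemma one_le_fnorm_polyF {P : Polynomial K} (hP : P ≠ 0) : 1 ≤ fnorm (polyF P) := by
  have hcoeff : (toL (polyF P)).coeff (-(P.natDegree : ℤ)) ≠ 0 := by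
    rwa [coeff_toL_polyF, Polynomial.coeff_natDegree, Polynomial.leadingCoeff_ne_zero]
  have hne : toL (polyF P) ≠ 0 := HahnSeries.ne_zero_of_coeff_ne_zero hcoeff
  have horder : (toL (polyF P)).order ≤ -(P.natDegree : ℤ) :=
    HahnSeries.order_le_of_coeff_ne_zero hcoeff
  rw [fnorm, if_neg hne]
  exact one_le_zpow₀ one_le_q (by omega)

section Vectors

variable {ι : Type*} [Fintype ι]

lemma fnorm_sub_le (x y : FF K) : fnorm (x - y) ≤ max (fnorm x) (fnorm y) := by
  simpa only [sub_eq_add_neg, fnorm_neg] using fnorm_add_le x (-y)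

lemma fnorm_le_vnorm (v : ι → FF K) (i : ι) : fnorm (v i) ≤ vnorm v :=
  le_ciSup (f := fun i => fnorm (v i)) (Set.finite_range _).bddAbove i

lemma vnorm_nonneg (v : ι → FF K) : 0 ≤ vnorm v :=
  Real.iSup_nonneg fun _ => fnorm_nonneg _

lemma vnorm_eq_zero {v : ι → FF K} : vnorm v = 0 ↔ v = 0 where
  mp h := funext fun i =>
    fnorm_eq_zero.1 (le_antisymm ((fnorm_le_vnorm v i).trans_eq h) (fnorm_nonneg _))
  mpr h := le_antisymm
    (Real.iSup_le (fun i => (fnorm_eq_zero.2 (congrFun h i)).le) le_rfl) (vnorm_nonneg v)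

lemma vnorm_sub_le (u v : ι → FF K) : vnorm (u - v) ≤ max (vnorm u) (vnorm v) :=
  Real.iSup_le (fun i => (fnorm_sub_le _ _).trans <|
    max_le_max (fnorm_le_vnorm u i) (fnorm_le_vnorm v i)) (le_max_of_le_left (vnorm_nonneg u))

lemma pnorm_sub_le (x y : ι → Polynomial K) : pnorm (x - y) ≤ max (pnorm x) (pnorm y) := by
  simpa only [pnorm, Pi.sub_def, polyF_sub] using
    vnorm_sub_le (fun i => (polyF (x i) : FF K)) fun i => polyF (y i)

lemma bddBelow_range_vnorm_sub_polyF (v : ι → FF K) :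
    BddBelow (Set.range fun y : ι → Polynomial K => vnorm fun i => v i - polyF (y i)) :=
  ⟨0, Set.forall_mem_range.2 fun _ => vnorm_nonneg _⟩

lemma vdist_nonneg (v : ι → FF K) : 0 ≤ vdist v :=
  Real.iInf_nonneg fun _ => vnorm_nonneg _

lemma vdist_le_vnorm_sub_polyF (v : ι → FF K) (y : ι → Polynomial K) :
    vdist v ≤ vnorm fun i => v i - polyF (y i) :=
  ciInf_le (bddBelow_range_vnorm_sub_polyF v) y

lemma vdist_lt_iff {v : ι → FF K} {r : ℝ} :
    vdist v < r ↔ ∃ y : ι → Polynomial K, vnorm (fun i => v i - polyF (y i)) < r :=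
  ciInf_lt_iff (bddBelow_range_vnorm_sub_polyF v)

lemma vdist_sub_le (u v : ι → FF K) : vdist (u - v) ≤ max (vdist u) (vdist v) := by
  refine le_of_forall_gt_imp_ge_of_dense fun r hr => ?_
  obtain ⟨y, hy⟩ := vdist_lt_iff.1 ((le_max_left _ _).trans_lt hr)
  obtain ⟨w, hw⟩ := vdist_lt_iff.1 ((le_max_right _ _).trans_lt hr)
  calc vdist (u - v) ≤ vnorm fun i => (u - v) i - polyF ((y - w) i) :=
        vdist_le_vnorm_sub_polyF _ _
    _ = vnorm ((fun i => u i - polyF (y i)) - fun i => v i - polyF (w i)) := by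
        simp only [Pi.sub_def, polyF_sub, sub_sub_sub_comm]
    _ ≤ r := (vnorm_sub_le _ _).trans (max_le hy.le hw.le)

/-- A second polynomial vector at distance less than `1` from `v` would differ from `y` by a nonzero
polynomial vector of norm less than `1`. -/
lemma vdist_eq_vnorm_sub_polyF {v : ι → FF K} {y : ι → Polynomial K}
    (hy : vnorm (fun i => v i - polyF (y i)) < 1) :
    vdist v = vnorm fun i => v i - polyF (y i) := by
  refine le_antisymm (vdist_le_vnorm_sub_polyF v y) (le_ciInf fun w => ?_)
  rcases eq_or_ne w y with rfl | hwy
  · rfl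
  obtain ⟨i, hi⟩ := Function.ne_iff.1 hwy
  have hmax : 1 ≤ max (fnorm (v i - polyF (y i))) (fnorm (v i - polyF (w i))) :=
    calc 1 ≤ fnorm (polyF (w i - y i)) := one_le_fnorm_polyF (sub_ne_zero.2 hi)
      _ = fnorm ((v i - polyF (y i)) - (v i - polyF (w i))) := by
          rw [polyF_sub, sub_sub_sub_cancel_left]
      _ ≤ _ := fnorm_sub_le _ _
  have hyi : fnorm (v i - polyF (y i)) < 1 := (fnorm_le_vnorm _ i).trans_lt hy
  have hwi : 1 ≤ fnorm (v i - polyF (w i)) := (le_max_iff.1 hmax).resolve_left hyi.not_ge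
  exact hy.le.trans (hwi.trans (fnorm_le_vnorm (fun i => v i - polyF (w i)) i))

lemma vdist_eq_zero_iff {v : ι → FF K} :
    vdist v = 0 ↔ ∃ y : ι → Polynomial K, v = fun i => polyF (y i) := by
  constructor
  · intro hv
    obtain ⟨y, hy⟩ := vdist_lt_iff.1 (hv.trans_lt one_pos)
    rw [vdist_eq_vnorm_sub_polyF hy, vnorm_eq_zero] at hv
    exact ⟨y, sub_eq_zero.1 hv⟩
  · rintro ⟨y, rfl⟩
    exact le_antisymm ((vdist_le_vnorm_sub_polyF _ y).trans_eq
      (vnorm_eq_zero.2 (funext fun _ => sub_self _))) (vdist_nonneg _)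

end Vectors

section ApproximationError

variable {ι κ : Type*} [Fintype ι] [Fintype κ]

/-- The quantity `⟨A x - θ⟩`: the error of the polynomial vector `x` as a solution of the
inhomogeneous approximation problem for `(A, θ)`. -/
def inhomError (A : Matrix ι κ (FF K)) (θ : ι → FF K) (x : κ → Polynomial K) : ℝ :=
  vdist (A.mulVec (fun j => polyF (x j)) - θ)

lemma inhomError_eq_zero_iff {A : Matrix ι κ (FF K)} {θ : ι → FF K} {x : κ → Polynomial K} :
    inhomError A θ x = 0 ↔
      ∃ y : ι → Polynomial K, θ = A.mulVec (fun j => polyF (x j)) + fun i => polyF (y i) := by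
  rw [inhomError, vdist_eq_zero_iff]
  refine (Equiv.neg (ι → Polynomial K)).exists_congr fun y => ?_
  have hneg : (fun i => polyF ((-y) i)) = -fun i => polyF (y i) := funext fun i => polyF_neg (y i)
  rw [Equiv.neg_apply, hneg, ← sub_eq_add_neg, sub_eq_iff_eq_add', eq_sub_iff_add_eq, eq_comm]

lemma vdist_mulVec_sub_le (A : Matrix ι κ (FF K)) (θ : ι → FF K) (x x' : κ → Polynomial K) :
    vdist (A.mulVec fun j => polyF ((x - x') j)) ≤
      max (inhomError A θ x) (inhomError A θ x') := by
  have hsub : (A.mulVec fun j => polyF ((x - x') j)) =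
      (A.mulVec (fun j => polyF (x j)) - θ) - (A.mulVec (fun j => polyF (x' j)) - θ) := by
    rw [sub_sub_sub_cancel_right, ← Matrix.mulVec_sub]
    simp only [Pi.sub_def, polyF_sub]
  exact hsub ▸ vdist_sub_le _ _

end ApproximationError

section Transference

variable {m n : ℕ} {A : Matrix (Fin n) (Fin m) (FF K)} {θ : Fin n → FF K} {H₀ η ω : ℝ}

lemma exists_ne_zero_vdist_mulVec_le_of_forall_solv {c H : ℝ} (hc : 1 < c) (hω : 0 < ω)
    (hθ : ∀ x, inhomError A θ x ≠ 0) (hsolv : ∀ H, H₀ ≤ H → Solv A θ ω H) (hH : H₀ ≤ H) :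
    ∃ T, H ≤ T ∧ ∃ x : Fin m → Polynomial K,
      x ≠ 0 ∧ vdist (A.mulVec fun j => polyF (x j)) ≤ T ^ (-ω) ∧ pnorm x ≤ c * T := by
  obtain ⟨x, hx : inhomError A θ x ≤ H ^ (-ω), hxH⟩ := hsolv H hH
  have hpos : 0 < inhomError A θ x := (vdist_nonneg _).lt_of_ne' (hθ x)
  have hω' : -ω < 0 := neg_neg_of_pos hω
  obtain ⟨T, hT, hTω⟩ : ∃ T : ℝ, 0 < T ∧ T ^ (-ω) = inhomError A θ x :=
    ⟨_, Real.rpow_pos_of_pos hpos _, Real.rpow_inv_rpow hpos.le hω'.ne⟩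
  have hHT : H ≤ T := le_of_not_gt fun hTH =>
    (Real.rpow_lt_rpow_of_neg hT hTH hω').not_ge (hTω ▸ hx)
  have hTc : T < c * T := lt_mul_of_one_lt_left hT hc
  obtain ⟨x', hx' : inhomError A θ x' ≤ (c * T) ^ (-ω), hxT'⟩ :=
    hsolv (c * T) (hH.trans (hHT.trans hTc.le))
  have hlt : inhomError A θ x' < inhomError A θ x :=
    calc inhomError A θ x' ≤ (c * T) ^ (-ω) := hx'
      _ < T ^ (-ω) := Real.rpow_lt_rpow_of_neg hT hTc hω'
      _ = inhomError A θ x := hTω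
  refine ⟨T, hHT, x - x', sub_ne_zero.2 fun h => hlt.ne (by rw [h]), ?_, ?_⟩
  · exact (vdist_mulVec_sub_le A θ x x').trans (max_le hTω.ge (hlt.le.trans hTω.ge))
  · exact (pnorm_sub_le x x').trans (max_le (hxH.trans (hHT.trans hTc.le)) hxT')

lemma exists_ge_solvHom_of_forall_solv (hω : 0 < ω) (hη : η < ω)
    (hθ : ∀ x, inhomError A θ x ≠ 0) (hsolv : ∀ H, H₀ ≤ H → Solv A θ ω H) (H₁ : ℝ) :
    ∃ H, H₁ ≤ H ∧ SolvHom A η H := by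
  obtain ⟨N, hN⟩ := eventually_atTop.1 (eventually_rpow_neg_le_const_mul_rpow_neg two_pos hη)
  obtain ⟨T, hT, x, hx₀, hAx, hxT⟩ :=
    exists_ne_zero_vdist_mulVec_le_of_forall_solv (H := max H₀ (max N (max H₁ 0))) one_lt_two hω
      hθ hsolv (le_max_left _ _)
  simp only [max_le_iff] at hT
  obtain ⟨-, hNT, hH₁T, hT₀⟩ := hT
  exact ⟨2 * T, by linarith, x, hx₀, hAx.trans (hN T hNT), hxT⟩

end Transference

end FPSDA

/-- If `θ` is not in `A 𝔽_q[z]^m + 𝔽_q[z]ⁿ`, then `ω̂(A, θ) ≤ ω(A)`. -/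
theorem omegaHatInhom_le_omegaHom {K : Type*} [Field K] [Fintype K] {m n : ℕ}
    (hm : 0 < m) (hn : 0 < n)
    (A : Matrix (Fin n) (Fin m) (FF K)) (θ : Fin n → FF K)
    (hθ : ¬ ∃ (x : Fin m → Polynomial K) (y : Fin n → Polynomial K),
        θ = A.mulVec (fun j => polyF (x j)) + fun i => polyF (y i)) :
    omegaHatInhom A θ ≤ omegaHom A := by
  have hne : ∀ x, inhomError A θ x ≠ 0 := fun x hx => hθ ⟨x, inhomError_eq_zero_iff.1 hx⟩
  refine iSup₂_le fun ω ⟨H₀, hsolv⟩ => ENNReal.le_of_forall_nnreal_lt fun η hη => ?_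
  have hηω : (η : ℝ) < ω := ENNReal.coe_lt_ofReal.1 hη
  rw [← ENNReal.ofReal_coe_nnreal]
  exact le_iSup₂_of_le (η : ℝ)
    (exists_ge_solvHom_of_forall_solv (η.coe_nonneg.trans_lt hηω) hηω hne hsolv) le_rfl
end
end
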